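/- In the twin prime power construction, define A_0 := I_{(q+2)q²}, A_1 := (J_{q+2} − I_{q+2}) ⊗ I_{q²}, A_2 := I_{q+2} ⊗ (J_{q²} − I_{q²}), and A_{3,β} := N_β − A_1 for each nonzero β ∈ K. Then these q+4 matrices form a commutative association scheme with q+3 classes; explicitly: (1) every entry of each of these matrices is 0 or 1; (2) their sum equals J_{(q+2)q²}; (3) A_0, A_1, A_2 are symmetric and A_{3,β}^⊤ = A_{3,−β} for each nonzero β; (4) the product of any two matrices in the family lies in the ℝ-linear span of the family; (5) any two matrices in the family commute. -/

import Mathlib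

open Matrix Kronecker BigOperators

noncomputable section

/-- The all-ones matrix. -/
def allOnes (n : Type*) : Matrix n n ℝ := Matrix.of fun _ _ => 1

/-- The auxiliary matrices `C_a` for `a ∈ F ∪ {y}` (formally `Option F`, with `none`
playing the role of the extra symbol `y`, so that `C_y = I_q ⊗ J_q`). -/
def auxC {F : Type*} [Field F] [Fintype F] [DecidableEq F] :
    Option F → Matrix (F × F) (F × F) ℝ
  | some α => Matrix.of fun p r => if r.2 - p.2 = α * (r.1 - p.1) then 1 else 0
  | none => Matrix.of fun p r => if p.1 = r.1 then 1 else 0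

/-- The permutation matrix `P_{β,γ}` with `(a,b)`-entry `1` iff `β·(−a+b) = γ`. -/
def permP {K : Type*} [Field K] [DecidableEq K] (β γ : K) : Matrix K K ℝ :=
  Matrix.of fun a b => if β * (-a + b) = γ then 1 else 0

/-- The matrix `N_β = Σ_{γ∈K∖{0}} P_{β,γ} ⊗ C_{ψ(γ)}` of the twin prime power
construction, where `ψ : K∖{0} → F ∪ {y}` is a fixed bijection. -/
def NN {F K : Type*} [Field F] [Fintype F] [DecidableEq F]
    [Field K] [Fintype K] [DecidableEq K]
    (ψ : {x : K // x ≠ 0} ≃ Option F) (β : K) :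
    Matrix (K × (F × F)) (K × (F × F)) ℝ :=
  ∑ γ : {x : K // x ≠ 0}, permP β (γ : K) ⊗ₖ auxC (ψ γ)

/-- The family of adjacency matrices `A_0, A_1, A_2, A_{3,β}` (`β ∈ K∖{0}`) of the
association scheme obtained from twin prime powers: `A_0 = I`,
`A_1 = (J_{q+2} − I_{q+2}) ⊗ I_{q²}`, `A_2 = I_{q+2} ⊗ (J_{q²} − I_{q²})`, and
`A_{3,β} = N_β − A_1`. -/
def twinA {F K : Type*} [Field F] [Fintype F] [DecidableEq F]
    [Field K] [Fintype K] [DecidableEq K]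
    (ψ : {x : K // x ≠ 0} ≃ Option F) :
    (Fin 3 ⊕ {x : K // x ≠ 0}) → Matrix (K × (F × F)) (K × (F × F)) ℝ
  | Sum.inl i =>
      if i = 0 then 1
      else if i = 1 then (allOnes K - 1) ⊗ₖ (1 : Matrix (F × F) (F × F) ℝ)
      else (1 : Matrix K K ℝ) ⊗ₖ (allOnes (F × F) - 1)
  | Sum.inr β => NN ψ (β : K) - (allOnes K - 1) ⊗ₖ (1 : Matrix (F × F) (F × F) ℝ)

/-!
Write `q = |F|`, and `C_a = q (e_a + p)` where `p` is the averaging matrix `J / q²` on `F × F`.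
Since lines of different directions meet in exactly one point, the `e_a` are orthogonal
idempotents, also orthogonal to `p`; since two points lie on one line, `∑ e_a = 1 - p`. Writing
`T_t` for the translation by `t` on `K`, the matrices `U_s = ∑_γ T_{sγ} ⊗ e_{ψ(γ)}` therefore
satisfy `U_s U_t = U_{s+t}` and annihilate every `A ⊗ p`. Because `P_{β,γ} = T_{γ/β}`, one has
`N_β = q (U_{1/β} + (J - 1) ⊗ p)`, and the linear span of the family is that of `1 ⊗ p`, `J ⊗ p`
and the `U_s`, a commutative algebra.
-/

section Span

variable {R A : Type*} [CommSemiring R] [Semiring A] [Algebra R A] {s : Set A}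

lemma commute_of_mem_span
    (hs : ∀ x ∈ s, ∀ y ∈ s, Commute x y) {a b : A} (ha : a ∈ Submodule.span R s)
    (hb : b ∈ Submodule.span R s) : Commute a b :=
  Algebra.commute_of_mem_adjoin_of_forall_mem_commute (Algebra.span_le_adjoin R s hb) fun x hx =>
    (Algebra.commute_of_mem_adjoin_of_forall_mem_commute (Algebra.span_le_adjoin R s ha)
      fun y hy => hs x hx y hy).symm

lemma mul_mem_span_of_mul_mem_span
    (hs : ∀ x ∈ s, ∀ y ∈ s, x * y ∈ Submodule.span R s) {a b : A}
    (ha : a ∈ Submodule.span R s) (hb : b ∈ Submodule.span R s) : a * b ∈ Submodule.span R s := by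
  have hle : Submodule.span R s * Submodule.span R s ≤ Submodule.span R s := by
    rw [Submodule.span_mul_span, Submodule.span_le]
    rintro _ ⟨x, hx, y, hy, rfl⟩
    exact hs x hx y hy
  exact hle (Submodule.mul_mem_mul ha hb)

end Span

section Matrices

variable {l m n p ι R : Type*}

lemma sum_kronecker [NonUnitalNonAssocSemiring R] (s : Finset ι) (A : ι → Matrix l m R)
    (B : Matrix n p R) : (∑ i ∈ s, A i) ⊗ₖ B = ∑ i ∈ s, A i ⊗ₖ B := by
  ext
  simp [Matrix.sum_apply, Finset.sum_mul]

lemma kronecker_sum [NonUnitalNonAssocSemiring R] (s : Finset ι) (A : Matrix l m R)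
    (B : ι → Matrix n p R) : A ⊗ₖ (∑ i ∈ s, B i) = ∑ i ∈ s, A ⊗ₖ B i := by
  ext
  simp [Matrix.sum_apply, Finset.mul_sum]

lemma sub_kronecker [NonUnitalNonAssocRing R] (A B : Matrix l m R) (C : Matrix n p R) :
    (A - B) ⊗ₖ C = A ⊗ₖ C - B ⊗ₖ C := by
  ext
  simp [sub_mul]

lemma kronecker_sub [NonUnitalNonAssocRing R] (A : Matrix l m R) (B C : Matrix n p R) :
    A ⊗ₖ (B - C) = A ⊗ₖ B - A ⊗ₖ C := by
  ext
  simp [mul_sub]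

lemma allOnes_transpose (n : Type*) : (allOnes n)ᵀ = allOnes n := rfl

lemma allOnes_kronecker_allOnes (m n : Type*) : allOnes m ⊗ₖ allOnes n = allOnes (m × n) := by
  ext
  simp [allOnes]

lemma mul_eq_zero_or_one [MulZeroOneClass R] {x y : R} (hx : x = 0 ∨ x = 1) (hy : y = 0 ∨ y = 1) :
    x * y = 0 ∨ x * y = 1 := by
  rcases hx with rfl | rfl <;> simp [hy]

lemma one_apply_eq_zero_or_one [DecidableEq n] [Zero R] [One R] (i j : n) :
    (1 : Matrix n n R) i j = 0 ∨ (1 : Matrix n n R) i j = 1 :=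
  (ite_eq_or_eq _ _ _).symm

lemma allOnes_sub_one_apply_eq_zero_or_one [DecidableEq n] (i j : n) :
    (allOnes n - 1) i j = 0 ∨ (allOnes n - 1) i j = 1 := by
  by_cases h : i = j <;> simp [h, allOnes]

lemma cast_card_ne_zero (n : Type*) [Fintype n] [Nonempty n] : (Fintype.card n : ℝ) ≠ 0 :=
  Nat.cast_ne_zero.mpr Fintype.card_ne_zero

lemma allOnes_mul_allOnes (n : Type*) [Fintype n] :
    allOnes n * allOnes n = (Fintype.card n : ℝ) • allOnes n := by
  ext
  simp [Matrix.mul_apply, allOnes]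

/-- The matrix `(1 / |n|) J` of the orthogonal projection onto the constant vectors. -/
def averaging (n : Type*) [Fintype n] : Matrix n n ℝ :=
  (Fintype.card n : ℝ)⁻¹ • allOnes n

lemma allOnes_eq_card_smul_averaging (n : Type*) [Fintype n] [Nonempty n] :
    allOnes n = (Fintype.card n : ℝ) • averaging n := by
  rw [averaging, smul_inv_smul₀ (cast_card_ne_zero n)]

lemma averaging_mul_averaging (n : Type*) [Fintype n] [Nonempty n] :
    averaging n * averaging n = averaging n := by
  rw [averaging, smul_mul_smul_comm, allOnes_mul_allOnes, smul_smul, mul_assoc,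
    inv_mul_cancel₀ (cast_card_ne_zero n), mul_one]

lemma kronecker_averaging_mul_kronecker_averaging [Fintype m] [Fintype n] [Nonempty n]
    (A B : Matrix m m ℝ) : A ⊗ₖ averaging n * B ⊗ₖ averaging n = (A * B) ⊗ₖ averaging n := by
  rw [← mul_kronecker_mul, averaging_mul_averaging]

end Matrices

section Lines

variable {F : Type*} [Field F]

/-- The functional on the plane `F × F` whose level sets are the lines of direction `a`; the
direction `none` is that of the vertical lines. -/
def intercept : Option F → F × F → F
  | some α, p => p.2 - α * p.1
  | none, p => p.1

lemma intercept_prod_injective {a b : Option F} (hab : a ≠ b) :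
    Function.Injective fun p => (intercept a p, intercept b p) := by
  rintro ⟨x, y⟩ ⟨x', y'⟩ h
  obtain ⟨ha, hb⟩ := Prod.mk.inj h
  rcases a with _ | α <;> rcases b with _ | β <;> simp only [intercept] at ha hb
  · exact absurd rfl hab
  · exact Prod.ext ha (by linear_combination hb + β * ha)
  · exact Prod.ext hb (by linear_combination ha + α * hb)
  · have hαβ : α - β ≠ 0 := sub_ne_zero.mpr fun h => hab (congrArg some h)
    have hx : x = x' := mul_left_cancel₀ hαβ (by linear_combination hb - ha)
    exact Prod.ext hx (by linear_combination ha + α * hx)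

lemma existsUnique_intercept_eq {p r : F × F} (hpr : p ≠ r) :
    ∃! a : Option F, intercept a p = intercept a r := by
  have hex : ∃ a : Option F, intercept a p = intercept a r := by
    by_cases h : p.1 = r.1
    · exact ⟨none, h⟩
    · have hne : p.1 - r.1 ≠ 0 := sub_ne_zero.mpr h
      refine ⟨some ((p.2 - r.2) / (p.1 - r.1)), ?_⟩
      simp only [intercept]
      linear_combination -div_mul_cancel₀ (p.2 - r.2) hne
  refine existsUnique_of_exists_of_unique hex fun a b ha hb => ?_
  by_contra hab
  exact hpr (intercept_prod_injective hab (Prod.ext ha hb))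

variable [Fintype F]

lemma sum_comp_intercept_prod {M : Type*} [AddCommMonoid M] {a b : Option F} (hab : a ≠ b)
    (g : F → F → M) : ∑ p, g (intercept a p) (intercept b p) = ∑ u, ∑ v, g u v := by
  rw [← Fintype.sum_prod_type']
  exact (Finite.injective_iff_bijective.mp (intercept_prod_injective hab)).sum_comp
    fun w => g w.1 w.2

variable [DecidableEq F]

lemma auxC_apply (a : Option F) (p r : F × F) :
    auxC a p r = if intercept a p = intercept a r then 1 else 0 := by
  rcases a with _ | α
  · rfl
  · simp only [auxC, intercept, Matrix.of_apply]
    congr 1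
    rw [eq_iff_iff]
    constructor <;> intro h <;> linear_combination -h

lemma auxC_apply_self (a : Option F) (p : F × F) : auxC a p p = 1 := by
  simp [auxC_apply]

lemma auxC_sub_one_apply_eq_zero_or_one (a : Option F) (p r : F × F) :
    (auxC a - 1) p r = 0 ∨ (auxC a - 1) p r = 1 := by
  by_cases h : p = r
  · simp [h, auxC_apply_self]
  · rw [Matrix.sub_apply, Matrix.one_apply_ne h, sub_zero, auxC_apply]
    exact (ite_eq_or_eq _ _ _).symm

lemma auxC_transpose (a : Option F) : (auxC a)ᵀ = auxC a := by
  ext p r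
  simp only [Matrix.transpose_apply, auxC_apply, eq_comm]

lemma auxC_mul_auxC_of_ne {a b : Option F} (hab : a ≠ b) :
    auxC a * auxC b = allOnes (F × F) := by
  ext p r
  simp only [Matrix.mul_apply, auxC_apply]
  rw [sum_comp_intercept_prod hab fun u v =>
    (if intercept a p = u then (1 : ℝ) else 0) * if v = intercept b r then 1 else 0]
  simp [allOnes]

lemma auxC_mul_self (a : Option F) :
    auxC a * auxC a = (Fintype.card F : ℝ) • auxC a := by
  obtain ⟨b, hba⟩ := exists_ne a
  ext p r
  simp only [Matrix.mul_apply, Matrix.smul_apply, auxC_apply]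
  rw [sum_comp_intercept_prod hba.symm fun u _ =>
    (if intercept a p = u then (1 : ℝ) else 0) * if u = intercept a r then 1 else 0]
  simp

lemma sum_auxC : ∑ a : Option F, auxC a = allOnes (F × F) + (Fintype.card F : ℝ) • 1 := by
  ext p r
  simp only [Matrix.sum_apply, Matrix.add_apply, Matrix.smul_apply]
  by_cases hpr : p = r
  · subst hpr
    simp [auxC_apply, allOnes, add_comm]
  · obtain ⟨a, ha, huniq⟩ := existsUnique_intercept_eq hpr
    have hline (b : Option F) : intercept b p = intercept b r ↔ b = a :=
      ⟨huniq b, fun h => h ▸ ha⟩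
    simp [auxC_apply, hline, hpr, allOnes]

lemma auxC_mul_allOnes (a : Option F) :
    auxC a * allOnes (F × F) = (Fintype.card F : ℝ) • allOnes (F × F) := by
  -- Evaluate `C_a * ∑ b, C_b` termwise and through `sum_auxC`.
  have h : auxC a * ∑ b : Option F, auxC b =
      (Fintype.card F : ℝ) • auxC a + (Fintype.card F : ℝ) • allOnes (F × F) := by
    rw [Finset.mul_sum, ← Finset.add_sum_erase _ _ (Finset.mem_univ a), auxC_mul_self,
      Finset.sum_congr rfl fun b hb => auxC_mul_auxC_of_ne (Finset.ne_of_mem_erase hb).symm,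
      Finset.sum_const, Finset.card_erase_of_mem (Finset.mem_univ a), Finset.card_univ,
      Fintype.card_option, Nat.add_sub_cancel, ← Nat.cast_smul_eq_nsmul ℝ]
  rw [sum_auxC, mul_add, mul_smul_comm, mul_one, add_comm] at h
  exact add_left_cancel h

lemma allOnes_mul_auxC (a : Option F) :
    allOnes (F × F) * auxC a = (Fintype.card F : ℝ) • allOnes (F × F) := by
  simpa [Matrix.transpose_mul, auxC_transpose, allOnes_transpose] using
    congrArg Matrix.transpose (auxC_mul_allOnes a)

/-- The projection onto the functions that are constant on the lines of direction `a` and have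
mean zero. -/
def lineIdempotent (a : Option F) : Matrix (F × F) (F × F) ℝ :=
  (Fintype.card F : ℝ)⁻¹ • auxC a - averaging (F × F)

lemma auxC_eq_smul_lineIdempotent_add (a : Option F) :
    auxC a = (Fintype.card F : ℝ) • (lineIdempotent a + averaging (F × F)) := by
  rw [lineIdempotent, sub_add_cancel, smul_inv_smul₀ (cast_card_ne_zero F)]

lemma auxC_mul_averaging (a : Option F) :
    auxC a * averaging (F × F) = (Fintype.card F : ℝ) • averaging (F × F) := by
  rw [averaging, mul_smul_comm, auxC_mul_allOnes, smul_comm]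

lemma averaging_mul_auxC (a : Option F) :
    averaging (F × F) * auxC a = (Fintype.card F : ℝ) • averaging (F × F) := by
  rw [averaging, smul_mul_assoc, allOnes_mul_auxC, smul_comm]

lemma lineIdempotent_mul_averaging (a : Option F) :
    lineIdempotent a * averaging (F × F) = 0 := by
  rw [lineIdempotent, sub_mul, smul_mul_assoc, auxC_mul_averaging, averaging_mul_averaging,
    inv_smul_smul₀ (cast_card_ne_zero F), sub_self]

lemma averaging_mul_lineIdempotent (a : Option F) :
    averaging (F × F) * lineIdempotent a = 0 := by
  rw [lineIdempotent, mul_sub, mul_smul_comm, averaging_mul_auxC, averaging_mul_averaging,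
    inv_smul_smul₀ (cast_card_ne_zero F), sub_self]

lemma lineIdempotent_mul_lineIdempotent (a b : Option F) :
    lineIdempotent a * lineIdempotent b =
      ((Fintype.card F : ℝ)⁻¹ * (Fintype.card F : ℝ)⁻¹) • (auxC a * auxC b)
        - averaging (F × F) := by
  nth_rw 2 [lineIdempotent]
  rw [mul_sub, lineIdempotent_mul_averaging, sub_zero, mul_smul_comm, lineIdempotent, sub_mul,
    averaging_mul_auxC, smul_sub, inv_smul_smul₀ (cast_card_ne_zero F), smul_mul_assoc, smul_smul]

lemma orthogonalIdempotents_lineIdempotent :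
    OrthogonalIdempotents (lineIdempotent : Option F → Matrix (F × F) (F × F) ℝ) where
  idem a := by
    rw [IsIdempotentElem, lineIdempotent_mul_lineIdempotent, auxC_mul_self, smul_smul, mul_assoc,
      inv_mul_cancel₀ (cast_card_ne_zero F), mul_one, lineIdempotent]
  ortho a b hab := by
    change lineIdempotent a * lineIdempotent b = 0
    rw [lineIdempotent_mul_lineIdempotent, auxC_mul_auxC_of_ne hab, averaging, Fintype.card_prod,
      Nat.cast_mul, mul_inv, sub_self]

lemma sum_lineIdempotent : ∑ a : Option F, lineIdempotent a = 1 - averaging (F × F) := by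
  have hJ : (Fintype.card F : ℝ)⁻¹ • allOnes (F × F) =
      (Fintype.card F : ℝ) • averaging (F × F) := by
    rw [allOnes_eq_card_smul_averaging, Fintype.card_prod, Nat.cast_mul, mul_smul,
      inv_smul_smul₀ (cast_card_ne_zero F)]
  simp only [lineIdempotent]
  rw [Finset.sum_sub_distrib, ← Finset.smul_sum, sum_auxC, smul_add, hJ,
    inv_smul_smul₀ (cast_card_ne_zero F), Finset.sum_const, Finset.card_univ,
    Fintype.card_option, ← Nat.cast_smul_eq_nsmul ℝ]
  push_cast
  module

end Lines

section Translations

variable {G R : Type*} [AddGroup G] [DecidableEq G]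

variable (R) in
/-- The permutation matrix of the translation `a ↦ a + t` of an additive group. -/
def translation [Zero R] [One R] (t : G) : Matrix G G R :=
  (Equiv.addRight t).permMatrix R

lemma translation_apply [Zero R] [One R] (t a b : G) :
    translation R t a b = if a + t = b then 1 else 0 := by
  simp [translation, PEquiv.toMatrix_apply, eq_comm]

lemma translation_zero [Zero R] [One R] : translation R (0 : G) = 1 := by
  ext
  simp [translation_apply, Matrix.one_apply]

lemma translation_mul_translation [Fintype G] [NonAssocSemiring R] (s t : G) :
    translation R s * translation R t = translation R (s + t) := by
  rw [translation, translation, ← permMatrix_mul]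
  congr 1
  ext
  simp [add_assoc]

lemma sum_translation [Fintype G] : ∑ t : G, translation ℝ t = allOnes G := by
  ext
  simp [Matrix.sum_apply, translation_apply, allOnes, ← eq_neg_add_iff_add_eq]

end Translations

section TwistedSum

variable {ι n K R : Type*} [Fintype ι] [Ring K] [DecidableEq K] [CommSemiring R]

/-- The element `∑ i, T (s * f i) ⊗ e i`, where `T` is translation on `K`. For orthogonal
idempotents `e i` these elements multiply as the parameters `s` add. -/
def twistedSum (f : ι → K) (e : ι → Matrix n n R) (s : K) : Matrix (K × n) (K × n) R :=
  ∑ i, translation R (s * f i) ⊗ₖ e i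

lemma twistedSum_zero (f : ι → K) (e : ι → Matrix n n R) :
    twistedSum f e 0 = 1 ⊗ₖ ∑ i, e i := by
  simp only [twistedSum, zero_mul, translation_zero, kronecker_sum]

variable [Fintype K]

lemma sum_twistedSum {f : ι → K} (hf : ∀ i, IsUnit (f i)) (e : ι → Matrix n n ℝ) :
    ∑ s, twistedSum f e s = allOnes K ⊗ₖ ∑ i, e i := by
  have hsum (i : ι) : ∑ s, translation ℝ (s * f i) = allOnes K := by
    rw [← sum_translation]
    exact Equiv.sum_comp (hf i).unit.mulRight (translation ℝ)
  simp only [twistedSum]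
  rw [Finset.sum_comm, kronecker_sum]
  simp only [← sum_kronecker, hsum]

variable [Fintype n]

lemma twistedSum_mul_twistedSum [DecidableEq n] (f : ι → K) {e : ι → Matrix n n R}
    (he : OrthogonalIdempotents e) (s t : K) :
    twistedSum f e s * twistedSum f e t = twistedSum f e (s + t) := by
  classical
  simp only [twistedSum, Finset.sum_mul_sum, ← mul_kronecker_mul, translation_mul_translation,
    he.mul_eq, apply_ite, kronecker_zero, Finset.sum_ite_eq, Finset.mem_univ, if_true, add_mul]

lemma twistedSum_mul_kronecker_of_mul_eq_zero (f : ι → K) {e : ι → Matrix n n R}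
    {p : Matrix n n R} (hp : ∀ i, e i * p = 0) (s : K) (A : Matrix K K R) :
    twistedSum f e s * A ⊗ₖ p = 0 := by
  simp only [twistedSum, Finset.sum_mul, ← mul_kronecker_mul, hp, kronecker_zero,
    Finset.sum_const_zero]

lemma kronecker_mul_twistedSum_of_mul_eq_zero (f : ι → K) {e : ι → Matrix n n R}
    {p : Matrix n n R} (hp : ∀ i, p * e i = 0) (s : K) (A : Matrix K K R) :
    A ⊗ₖ p * twistedSum f e s = 0 := by
  simp only [twistedSum, Finset.mul_sum, ← mul_kronecker_mul, hp, kronecker_zero,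
    Finset.sum_const_zero]

end TwistedSum

section PermP

variable {K : Type*} [Field K] [DecidableEq K]

lemma permP_eq_translation {β : K} (hβ : β ≠ 0) (γ : K) :
    permP β γ = translation ℝ (β⁻¹ * γ) := by
  ext a b
  simp only [permP, translation_apply, Matrix.of_apply, eq_inv_mul_iff_mul_eq₀ hβ,
    ← eq_neg_add_iff_add_eq, eq_comm (a := β⁻¹ * γ)]

lemma permP_transpose (β γ : K) : (permP β γ)ᵀ = permP (-β) γ := by
  ext a b
  simp only [Matrix.transpose_apply, permP, Matrix.of_apply]
  rw [show -β * (-a + b) = β * (-b + a) by ring]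

lemma permP_inv_inv {β γ : K} (hβ : β ≠ 0) (hγ : γ ≠ 0) : permP γ⁻¹ β⁻¹ = permP β γ := by
  rw [permP_eq_translation hβ, permP_eq_translation (inv_ne_zero hγ), inv_inv, mul_comm]

variable [Fintype K]

lemma sum_permP_apply_mul (β a b : K) (g : {x : K // x ≠ 0} → ℝ) :
    ∑ γ : {x : K // x ≠ 0}, permP β γ a b * g γ =
      if h : β * (-a + b) ≠ 0 then g ⟨β * (-a + b), h⟩ else 0 := by
  simp only [permP, Matrix.of_apply, ite_mul, one_mul, zero_mul]
  split_ifs with h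
  · rw [Finset.sum_eq_single ⟨β * (-a + b), h⟩]
    · simp
    · exact fun γ _ hγ => if_neg fun heq => hγ (Subtype.ext heq.symm)
    · simp
  · exact Finset.sum_eq_zero fun γ _ => if_neg fun heq => h (heq.trans_ne γ.2)

lemma sum_permP_right {β : K} (hβ : β ≠ 0) :
    ∑ γ : {x : K // x ≠ 0}, permP β γ = allOnes K - 1 := by
  ext a b
  have h := sum_permP_apply_mul β a b fun _ => 1
  simp only [mul_one] at h
  rw [Matrix.sum_apply, h]
  by_cases hab : a = b <;> simp [hab, hβ, neg_add_eq_zero, allOnes]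

lemma sum_permP_left {γ : K} (hγ : γ ≠ 0) :
    ∑ β : {x : K // x ≠ 0}, permP (β : K) γ = allOnes K - 1 := by
  rw [← sum_permP_right (inv_ne_zero hγ)]
  exact Fintype.sum_equiv ((Equiv.inv K).subtypeEquiv fun _ => inv_eq_zero.not.symm) _ _
    fun β => (permP_inv_inv β.2 hγ).symm

end PermP

section Scheme

variable {F K : Type*} [Field F] [Fintype F] [DecidableEq F]
  [Field K] [Fintype K] [DecidableEq K]
  (ψ : {x : K // x ≠ 0} ≃ Option F)

lemma twinA_zero : twinA ψ (Sum.inl 0) = 1 := rfl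

lemma twinA_one : twinA ψ (Sum.inl 1) = (allOnes K - 1) ⊗ₖ 1 := rfl

lemma twinA_two : twinA ψ (Sum.inl 2) = 1 ⊗ₖ (allOnes (F × F) - 1) := rfl

lemma twinA_inr (β : {x : K // x ≠ 0}) :
    twinA ψ (Sum.inr β) = ∑ γ : {x : K // x ≠ 0}, permP (β : K) γ ⊗ₖ (auxC (ψ γ) - 1) := by
  simp only [twinA, NN, kronecker_sub, Finset.sum_sub_distrib, ← sum_kronecker,
    sum_permP_right β.2]

lemma sum_twinA : ∑ i, twinA ψ i = allOnes (K × (F × F)) := by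
  have hC : ∑ γ : {x : K // x ≠ 0}, (auxC (ψ γ) - 1) = allOnes (F × F) - 1 := by
    rw [Finset.sum_sub_distrib, Equiv.sum_comp ψ auxC, sum_auxC, Finset.sum_const,
      Finset.card_univ, Fintype.card_congr ψ, Fintype.card_option, ← Nat.cast_smul_eq_nsmul ℝ]
    push_cast
    module
  have hN : ∑ β, twinA ψ (Sum.inr β) = (allOnes K - 1) ⊗ₖ (allOnes (F × F) - 1) := by
    simp only [twinA_inr]
    rw [Finset.sum_comm, ← hC, kronecker_sum]
    exact Finset.sum_congr rfl fun γ _ => by rw [← sum_kronecker, sum_permP_left γ.2]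
  rw [Fintype.sum_sum_type, Fin.sum_univ_three, twinA_zero, twinA_one, twinA_two, hN,
    ← allOnes_kronecker_allOnes K (F × F)]
  simp only [sub_kronecker, kronecker_sub, one_kronecker_one]
  abel

lemma twinA_inl_transpose (i : Fin 3) :
    (twinA ψ (Sum.inl i))ᵀ = twinA ψ (Sum.inl i) := by
  fin_cases i <;>
    simp [twinA, ← kroneckerMap_transpose, allOnes_transpose]

lemma twinA_inr_transpose (β : {x : K // x ≠ 0}) :
    (twinA ψ (Sum.inr β))ᵀ = twinA ψ (Sum.inr ⟨-(β : K), neg_ne_zero.mpr β.2⟩) := by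
  simp only [twinA_inr, Matrix.transpose_sum, ← kroneckerMap_transpose, permP_transpose,
    Matrix.transpose_sub, auxC_transpose, Matrix.transpose_one]

lemma twinA_apply_eq_zero_or_one (i : Fin 3 ⊕ {x : K // x ≠ 0}) (p r : K × (F × F)) :
    twinA ψ i p r = 0 ∨ twinA ψ i p r = 1 := by
  rcases i with i | β
  · fin_cases i
    · exact one_apply_eq_zero_or_one p r
    · exact mul_eq_zero_or_one (allOnes_sub_one_apply_eq_zero_or_one _ _)
        (one_apply_eq_zero_or_one _ _)
    · exact mul_eq_zero_or_one (one_apply_eq_zero_or_one _ _)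
        (allOnes_sub_one_apply_eq_zero_or_one _ _)
  · obtain ⟨a, x⟩ := p
    obtain ⟨b, y⟩ := r
    rw [twinA_inr, Matrix.sum_apply]
    simp only [kronecker_apply]
    rw [sum_permP_apply_mul (β : K) a b fun γ => (auxC (ψ γ) - 1) x y]
    split_ifs
    · exact auxC_sub_one_apply_eq_zero_or_one _ x y
    · exact Or.inl rfl

/-- The generator `U_s` of the copy of the group algebra of `K` inside the Bose-Mesner algebra:
`U_s U_t = U_{s+t}`, and `N_β` is `q U_{1/β}` up to a multiple of `(J - I) ⊗ J`. -/
def lineTwist (s : K) : Matrix (K × (F × F)) (K × (F × F)) ℝ :=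
  twistedSum Subtype.val (lineIdempotent ∘ ψ) s

/-- A spanning set of the Bose-Mesner algebra adapted to its decomposition into the group algebra
of `K` and the two-dimensional algebra spanned by `I ⊗ J` and `J`. -/
def schemeGenerators : Set (Matrix (K × (F × F)) (K × (F × F)) ℝ) :=
  {1 ⊗ₖ averaging (F × F), allOnes K ⊗ₖ averaging (F × F)} ∪ Set.range (lineTwist ψ)

lemma one_kronecker_averaging_mem_span_schemeGenerators :
    1 ⊗ₖ averaging (F × F) ∈ Submodule.span ℝ (schemeGenerators ψ) :=
  Submodule.subset_span (Or.inl (Or.inl rfl))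

lemma allOnes_kronecker_averaging_mem_span_schemeGenerators :
    allOnes K ⊗ₖ averaging (F × F) ∈ Submodule.span ℝ (schemeGenerators ψ) :=
  Submodule.subset_span (Or.inl (Or.inr rfl))

lemma lineTwist_mem_span_schemeGenerators (s : K) :
    lineTwist ψ s ∈ Submodule.span ℝ (schemeGenerators ψ) :=
  Submodule.subset_span (Or.inr ⟨s, rfl⟩)

lemma lineTwist_mul_lineTwist (s t : K) :
    lineTwist ψ s * lineTwist ψ t = lineTwist ψ (s + t) :=
  twistedSum_mul_twistedSum _ ((OrthogonalIdempotents.equiv ψ).mpr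
    orthogonalIdempotents_lineIdempotent) s t

lemma lineTwist_mul_kronecker_averaging (s : K) (A : Matrix K K ℝ) :
    lineTwist ψ s * A ⊗ₖ averaging (F × F) = 0 :=
  twistedSum_mul_kronecker_of_mul_eq_zero _ (fun _ => lineIdempotent_mul_averaging _) s A

lemma kronecker_averaging_mul_lineTwist (s : K) (A : Matrix K K ℝ) :
    A ⊗ₖ averaging (F × F) * lineTwist ψ s = 0 :=
  kronecker_mul_twistedSum_of_mul_eq_zero _ (fun _ => averaging_mul_lineIdempotent _) s A

lemma lineTwist_zero : lineTwist ψ 0 = 1 - 1 ⊗ₖ averaging (F × F) := by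
  rw [lineTwist, twistedSum_zero]
  simp only [Function.comp_apply]
  rw [Equiv.sum_comp ψ lineIdempotent, sum_lineIdempotent, kronecker_sub, one_kronecker_one]

lemma sum_lineTwist :
    ∑ s, lineTwist ψ s = allOnes K ⊗ₖ 1 - allOnes K ⊗ₖ averaging (F × F) := by
  simp only [lineTwist]
  rw [sum_twistedSum fun γ => γ.2.isUnit]
  simp only [Function.comp_apply]
  rw [Equiv.sum_comp ψ lineIdempotent, sum_lineIdempotent, kronecker_sub]

lemma NN_eq_lineTwist {β : K} (hβ : β ≠ 0) :
    NN ψ β = (Fintype.card F : ℝ) •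
      (lineTwist ψ β⁻¹ + (allOnes K - 1) ⊗ₖ averaging (F × F)) := by
  simp only [NN, lineTwist, twistedSum, Function.comp_apply, auxC_eq_smul_lineIdempotent_add,
    kronecker_smul, kronecker_add, smul_add, Finset.sum_add_distrib, ← Finset.smul_sum,
    ← sum_kronecker, sum_permP_right hβ]
  simp only [permP_eq_translation hβ]

lemma commute_of_mem_schemeGenerators {X Y : Matrix (K × (F × F)) (K × (F × F)) ℝ}
    (hX : X ∈ schemeGenerators ψ) (hY : Y ∈ schemeGenerators ψ) : Commute X Y := by
  rw [Commute, SemiconjBy]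
  rcases hX with (rfl | rfl) | ⟨s, rfl⟩ <;> rcases hY with (rfl | rfl) | ⟨t, rfl⟩ <;>
    simp only [lineTwist_mul_lineTwist, lineTwist_mul_kronecker_averaging,
      kronecker_averaging_mul_lineTwist, kronecker_averaging_mul_kronecker_averaging, one_mul,
      mul_one, add_comm]

lemma mul_mem_span_schemeGenerators {X Y : Matrix (K × (F × F)) (K × (F × F)) ℝ}
    (hX : X ∈ schemeGenerators ψ) (hY : Y ∈ schemeGenerators ψ) :
    X * Y ∈ Submodule.span ℝ (schemeGenerators ψ) := by
  rcases hX with (rfl | rfl) | ⟨s, rfl⟩ <;> rcases hY with (rfl | rfl) | ⟨t, rfl⟩ <;>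
    simp only [lineTwist_mul_lineTwist, lineTwist_mul_kronecker_averaging,
      kronecker_averaging_mul_lineTwist, kronecker_averaging_mul_kronecker_averaging, one_mul,
      mul_one, allOnes_mul_allOnes, smul_kronecker, Submodule.zero_mem, Submodule.smul_mem,
      one_kronecker_averaging_mem_span_schemeGenerators ψ,
      allOnes_kronecker_averaging_mem_span_schemeGenerators ψ,
      lineTwist_mem_span_schemeGenerators ψ]

lemma twinA_mem_span_schemeGenerators (i : Fin 3 ⊕ {x : K // x ≠ 0}) :
    twinA ψ i ∈ Submodule.span ℝ (schemeGenerators ψ) := by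
  set S := Submodule.span ℝ (schemeGenerators ψ)
  have hI : 1 ⊗ₖ averaging (F × F) ∈ S := one_kronecker_averaging_mem_span_schemeGenerators ψ
  have hJ : allOnes K ⊗ₖ averaging (F × F) ∈ S :=
    allOnes_kronecker_averaging_mem_span_schemeGenerators ψ
  have hU (s : K) : lineTwist ψ s ∈ S := lineTwist_mem_span_schemeGenerators ψ s
  have h_one : (1 : Matrix (K × (F × F)) (K × (F × F)) ℝ) ∈ S := by
    simpa [lineTwist_zero] using S.add_mem (hU 0) hI
  have hA₁ : (allOnes K - 1) ⊗ₖ (1 : Matrix (F × F) (F × F) ℝ) ∈ S := by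
    rw [sub_kronecker, one_kronecker_one]
    refine S.sub_mem ?_ h_one
    simpa [sum_lineTwist] using S.add_mem (S.sum_mem fun s (_ : s ∈ Finset.univ) => hU s) hJ
  rcases i with i | β
  · fin_cases i
    · exact h_one
    · exact hA₁
    · change 1 ⊗ₖ (allOnes (F × F) - 1) ∈ S
      rw [kronecker_sub, one_kronecker_one, allOnes_eq_card_smul_averaging, kronecker_smul]
      exact S.sub_mem (S.smul_mem _ hI) h_one
  · refine S.sub_mem ?_ hA₁
    rw [NN_eq_lineTwist ψ β.2, sub_kronecker]
    exact S.smul_mem _ (S.add_mem (hU _) (S.sub_mem hJ hI))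

lemma schemeGenerators_subset_span_twinA :
    schemeGenerators ψ ⊆ Submodule.span ℝ (Set.range (twinA ψ)) := by
  set S := Submodule.span ℝ (Set.range (twinA ψ))
  have hA (i) : twinA ψ i ∈ S := Submodule.subset_span ⟨i, rfl⟩
  have h_one : (1 : Matrix (K × (F × F)) (K × (F × F)) ℝ) ∈ S := hA (Sum.inl 0)
  have hI : (1 : Matrix K K ℝ) ⊗ₖ averaging (F × F) ∈ S := by
    rw [averaging, kronecker_smul]
    refine S.smul_mem _ ?_
    simpa [twinA_two, kronecker_sub] using S.add_mem (hA (Sum.inl 2)) h_one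
  have hJ : allOnes K ⊗ₖ averaging (F × F) ∈ S := by
    rw [averaging, kronecker_smul, allOnes_kronecker_allOnes, ← sum_twinA ψ]
    exact S.smul_mem _ (S.sum_mem fun i _ => hA i)
  rintro _ ((rfl | rfl) | ⟨s, rfl⟩)
  · exact hI
  · exact hJ
  · rcases eq_or_ne s 0 with rfl | hs
    · rw [lineTwist_zero]
      exact S.sub_mem h_one hI
    · have hN : NN ψ s⁻¹ ∈ S := by
        simpa [twinA] using S.add_mem (hA (Sum.inr ⟨s⁻¹, inv_ne_zero hs⟩)) (hA (Sum.inl 1))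
      have hU : lineTwist ψ s = (Fintype.card F : ℝ)⁻¹ • NN ψ s⁻¹ -
          (allOnes K ⊗ₖ averaging (F × F) - 1 ⊗ₖ averaging (F × F)) := by
        rw [NN_eq_lineTwist ψ (inv_ne_zero hs), inv_inv, inv_smul_smul₀ (cast_card_ne_zero F),
          sub_kronecker, add_sub_cancel_right]
      rw [hU]
      exact S.sub_mem (S.smul_mem _ hN) (S.sub_mem hJ hI)

lemma span_range_twinA :
    Submodule.span ℝ (Set.range (twinA ψ)) = Submodule.span ℝ (schemeGenerators ψ) :=
  le_antisymm
    (Submodule.span_le.mpr (Set.range_subset_iff.mpr (twinA_mem_span_schemeGenerators ψ)))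
    (Submodule.span_le.mpr (schemeGenerators_subset_span_twinA ψ))

end Scheme

/-- The matrices `A_0, A_1, A_2, A_{3,β}` (`β ∈ K∖{0}`) form a commutative association
scheme with `q+3` classes: they are `(0,1)`-matrices summing to the all-ones matrix,
the family is closed under transposition (`A_0, A_1, A_2` are symmetric and
`A_{3,β}ᵀ = A_{3,−β}`), the product of any two members lies in the linear span of the
family, and any two members commute. -/
theorem twin_association_scheme {F K : Type*} [Field F] [Fintype F] [DecidableEq F]
    [Field K] [Fintype K] [DecidableEq K]
    (hcard : Fintype.card K = Fintype.card F + 2)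
    (ψ : {x : K // x ≠ 0} ≃ Option F) :
    (∀ i p r, twinA ψ i p r = 0 ∨ twinA ψ i p r = 1) ∧
    (∑ i, twinA ψ i) = allOnes (K × (F × F)) ∧
    ((∀ i : Fin 3, (twinA ψ (Sum.inl i))ᵀ = twinA ψ (Sum.inl i)) ∧
      ∀ β : {x : K // x ≠ 0},
        (twinA ψ (Sum.inr β))ᵀ = twinA ψ (Sum.inr ⟨-(β : K), neg_ne_zero.mpr β.2⟩)) ∧
    (∀ i j, twinA ψ i * twinA ψ j ∈ Submodule.span ℝ (Set.range (twinA ψ))) ∧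
    (∀ i j, twinA ψ i * twinA ψ j = twinA ψ j * twinA ψ i) := by
  refine ⟨twinA_apply_eq_zero_or_one ψ, sum_twinA ψ,
    ⟨twinA_inl_transpose ψ, twinA_inr_transpose ψ⟩, fun i j => ?_, fun i j => ?_⟩
  · rw [span_range_twinA]
    exact mul_mem_span_of_mul_mem_span (fun _ hX _ hY => mul_mem_span_schemeGenerators ψ hX hY)
      (twinA_mem_span_schemeGenerators ψ i) (twinA_mem_span_schemeGenerators ψ j)
  · exact commute_of_mem_span (fun _ hX _ hY => commute_of_mem_schemeGenerators ψ hX hY)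
      (twinA_mem_span_schemeGenerators ψ i) (twinA_mem_span_schemeGenerators ψ j)
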